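/- arXiv:math/0310059 — 5 statements merged into one kernel-verified Lean document; each statement's English description precedes it below -/
import Mathlib

section
/- For every integer n ≥ 1 and every n×n matrix A with entries in {0,1} such that every row sum r(i) = Σ_j A(i,j) is at least 1, the permanent of A satisfies per(A) ≤ Π_{i=1}^n g(r(i))/e, where g is the Bregman-like sequence defined below. -/
/-!
Extend `g / e` to zero by `h 0 = 0`; the bound `per A ≤ ∏ i, h (r i)` then makes sense for every 0-1
matrix, zero rows included, and is proved by induction on `n`, expanding along the first column.
If `C` is the set of rows with a one in that column, and `t k` is the sum of the other entries of row `k`,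
the induction step is the inequality

  `∑ i ∈ C, ∏ k ∈ C \ {i}, h (t k) ≤ ∏ k ∈ C, h (t k + 1)`.

If some `t k` vanishes, only the term `i = k` can survive on the left, and the inequality is just
monotonicity of `h`. Otherwise the left side is `P * S` with `P = ∏ h (t k)` and
`S = ∑ (h (t k))⁻¹`. The recursion for `g` is chosen so that `g a * exp (1 / g a) ≤ g (a + 1)`,
because `exp x ≤ 1 + x + x² / 2 + (3/5) x³` on `[0, 1]`. Hence the right side is at least
`P * exp (S / e)`, and `S ≤ exp (S / e)` is the tangent-line bound `y ≤ exp (y - 1)` at `y = S / e`.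
-/

/-- The Bregman-like sequence: `g 1 = e`, `g (a+1) = g a + 1 + 1/(2 g a) + 0.6/(g a)^2`. -/
noncomputable def bregmanG : ℕ → ℝ
  | 0 => Real.exp 1
  | 1 => Real.exp 1
  | (a + 2) => bregmanG (a + 1) + 1 + 1 / (2 * bregmanG (a + 1))
      + 0.6 / (bregmanG (a + 1)) ^ 2

open Finset

lemma bregmanG_succ (a : ℕ) : bregmanG (a + 2) = bregmanG (a + 1) + 1
    + 1 / (2 * bregmanG (a + 1)) + 0.6 / (bregmanG (a + 1)) ^ 2 := by
  rw [bregmanG]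

lemma exp_one_le_bregmanG (a : ℕ) : Real.exp 1 ≤ bregmanG (a + 1) := by
  induction a with
  | zero => simp [bregmanG]
  | succ a ih =>
    have h0 : 0 < bregmanG (a + 1) := (Real.exp_pos 1).trans_le ih
    have h1 : 0 < 1 / (2 * bregmanG (a + 1)) := by positivity
    have h2 : 0 < 0.6 / (bregmanG (a + 1)) ^ 2 := by positivity
    rw [bregmanG_succ]
    linarith

lemma bregmanG_mul_exp_le (a : ℕ) :
    bregmanG (a + 1) * Real.exp (1 / bregmanG (a + 1)) ≤ bregmanG (a + 2) := by
  have hge : 1 ≤ bregmanG (a + 1) :=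
    (Real.one_le_exp zero_le_one).trans (exp_one_le_bregmanG a)
  rw [bregmanG_succ]
  set g := bregmanG (a + 1)
  have h0 : 0 < g := by linarith
  have hx0 : 0 < 1 / g := by positivity
  have hx1 : 1 / g ≤ 1 := by rw [div_le_one h0]; exact hge
  have hb := Real.exp_bound' hx0.le hx1 (n := 3) (by norm_num)
  have hb' : Real.exp (1 / g) ≤ 1 + 1 / g + (1 / g) ^ 2 / 2 + 0.6 * (1 / g) ^ 3 := by
    refine hb.trans ?_
    simp only [Finset.sum_range_succ, Finset.sum_range_zero, Nat.factorial]
    have : 0 < (1 / g) ^ 3 := by positivity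
    generalize 1 / g = y at *
    norm_num
    linarith
  calc g * Real.exp (1 / g)
      ≤ g * (1 + 1 / g + (1 / g) ^ 2 / 2 + 0.6 * (1 / g) ^ 3) := by gcongr
    _ = _ := by field_simp

/-- The per-row factor `g r / e`, extended by `0` at `r = 0` (a zero row makes the permanent
vanish). The value of `bregmanG 0` plays no role. -/
noncomputable def rowFactor : ℕ → ℝ
  | 0 => 0
  | a + 1 => bregmanG (a + 1) / Real.exp 1

lemma rowFactor_succ_pos (a : ℕ) : 0 < rowFactor (a + 1) :=
  div_pos ((Real.exp_pos 1).trans_le (exp_one_le_bregmanG a)) (Real.exp_pos 1)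

lemma rowFactor_nonneg : ∀ a, 0 ≤ rowFactor a
  | 0 => le_rfl
  | a + 1 => (rowFactor_succ_pos a).le

lemma rowFactor_one : rowFactor 1 = 1 := by
  simp [rowFactor, bregmanG]

lemma rowFactor_mul_exp_le (a : ℕ) :
    rowFactor (a + 1) * Real.exp ((rowFactor (a + 1))⁻¹ / Real.exp 1) ≤ rowFactor (a + 2) := by
  have h1 : (rowFactor (a + 1))⁻¹ / Real.exp 1 = 1 / bregmanG (a + 1) := by
    have := (Real.exp_pos 1).trans_le (exp_one_le_bregmanG a)
    simp only [rowFactor]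
    field_simp
  rw [h1]
  simp only [rowFactor]
  rw [div_mul_eq_mul_div]
  exact div_le_div_of_nonneg_right (bregmanG_mul_exp_le a) (Real.exp_pos 1).le

lemma rowFactor_le_succ : ∀ a, rowFactor a ≤ rowFactor (a + 1)
  | 0 => (rowFactor_succ_pos 0).le
  | a + 1 => by
    have hp := rowFactor_succ_pos a
    refine le_trans ?_ (rowFactor_mul_exp_le a)
    exact le_mul_of_one_le_right hp.le (Real.one_le_exp (by positivity))

/-- The inequality behind the induction step: `C` is the set of rows meeting the deleted column and
`r k` is the sum of row `k` outside that column. -/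
lemma sum_prod_erase_rowFactor_le {ι : Type*} [DecidableEq ι] (C : Finset ι) (r : ι → ℕ) :
    ∑ i ∈ C, ∏ k ∈ C.erase i, rowFactor (r k) ≤ ∏ k ∈ C, rowFactor (r k + 1) := by
  by_cases hz : ∃ k ∈ C, r k = 0
  · obtain ⟨k, hk, hrk⟩ := hz
    rw [Finset.sum_eq_single_of_mem k hk, ← Finset.mul_prod_erase C _ hk, hrk, zero_add,
      rowFactor_one, one_mul]
    · exact Finset.prod_le_prod (fun _ _ => rowFactor_nonneg _) (fun _ _ => rowFactor_le_succ _)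
    · intro i _ hik
      refine Finset.prod_eq_zero (Finset.mem_erase.2 ⟨hik.symm, hk⟩) ?_
      rw [hrk, rowFactor]
  · push Not at hz
    have hpos : ∀ k ∈ C, 0 < rowFactor (r k) := fun k hk => by
      obtain ⟨a, ha⟩ := Nat.exists_eq_succ_of_ne_zero (hz k hk)
      rw [ha]
      exact rowFactor_succ_pos a
    have hleft : ∑ i ∈ C, ∏ k ∈ C.erase i, rowFactor (r k)
        = (∏ k ∈ C, rowFactor (r k)) * ∑ i ∈ C, (rowFactor (r i))⁻¹ := by
      rw [Finset.mul_sum]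
      refine Finset.sum_congr rfl fun i hi => ?_
      rw [← Finset.mul_prod_erase C _ hi]
      have := hpos i hi
      field_simp
    have hS : ∑ i ∈ C, (rowFactor (r i))⁻¹
        ≤ Real.exp ((∑ i ∈ C, (rowFactor (r i))⁻¹) / Real.exp 1) := by
      set S := ∑ i ∈ C, (rowFactor (r i))⁻¹
      have h := Real.add_one_le_exp (S / Real.exp 1 - 1)
      rwa [sub_add_cancel, Real.exp_sub,
        div_le_div_iff_of_pos_right (Real.exp_pos 1)] at h
    calc ∑ i ∈ C, ∏ k ∈ C.erase i, rowFactor (r k)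
        ≤ (∏ k ∈ C, rowFactor (r k))
            * Real.exp ((∑ i ∈ C, (rowFactor (r i))⁻¹) / Real.exp 1) := by
          rw [hleft]
          exact mul_le_mul_of_nonneg_left hS (Finset.prod_nonneg fun _ _ => rowFactor_nonneg _)
      _ = ∏ k ∈ C, rowFactor (r k) * Real.exp ((rowFactor (r k))⁻¹ / Real.exp 1) := by
          rw [Finset.prod_mul_distrib, Finset.sum_div, Real.exp_sum]
      _ ≤ ∏ k ∈ C, rowFactor (r k + 1) := by
          refine Finset.prod_le_prod
            (fun k _ => mul_nonneg (rowFactor_nonneg _) (Real.exp_pos _).le) fun k hk => ?_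
          obtain ⟨a, ha⟩ := Nat.exists_eq_succ_of_ne_zero (hz k hk)
          rw [ha]
          exact rowFactor_mul_exp_le a

/-- Laplace expansion of the permanent along column `0`. The minor omitting row `p` is taken with
its rows enumerated by `k ↦ swap 0 p k.succ`, which is the enumeration that
`Equiv.Perm.decomposeFin` produces; the order of the rows does not affect the permanent. -/
lemma permanent_succ_column_zero {n : ℕ} (A : Matrix (Fin (n + 1)) (Fin (n + 1)) ℕ) :
    A.permanent = ∑ p, A p 0 *
      (A.submatrix (fun k : Fin n => Equiv.swap 0 p k.succ) Fin.succ).permanent := by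
  rw [Matrix.permanent, Finset.univ_perm_fin_succ, ← Finset.univ_product_univ]
  simp only [Finset.sum_map, Equiv.toEmbedding_apply, Finset.sum_product, Fin.prod_univ_succ,
    Equiv.Perm.decomposeFin_symm_apply_zero, Equiv.Perm.decomposeFin_symm_apply_succ,
    Matrix.permanent, Matrix.submatrix_apply, Finset.mul_sum]

lemma prod_swap_succ {n : ℕ} (F : Fin (n + 1) → ℝ) (p : Fin (n + 1)) :
    ∏ k : Fin n, F (Equiv.swap 0 p k.succ) = ∏ i ∈ univ.erase p, F i := by
  have himg : univ.erase p = (univ.erase (0 : Fin (n + 1))).map (Equiv.swap 0 p).toEmbedding := by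
    rw [Finset.map_erase, Finset.map_univ_equiv]
    simp
  have h0 : univ.erase (0 : Fin (n + 1)) = univ.map (Fin.succEmb n) := by
    ext i
    cases i using Fin.cases <;> simp
  rw [himg, h0, Finset.prod_map, Finset.prod_map]
  rfl

/-- The bound for arbitrary 0-1 matrices, without the assumption that rows are nonzero. -/
lemma permanent_le_prod_rowFactor : ∀ (n : ℕ) (A : Matrix (Fin n) (Fin n) ℕ),
    (∀ i j, A i j = 0 ∨ A i j = 1) → (A.permanent : ℝ) ≤ ∏ i, rowFactor (∑ j, A i j)
  | 0, A, _ => by simp [Matrix.permanent_isEmpty]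
  | n + 1, A, h01 => by
    set r : Fin (n + 1) → ℕ := fun i => ∑ j : Fin n, A i j.succ with hr
    set C : Finset (Fin (n + 1)) := univ.filter fun i => A i 0 = 1 with hC
    have hmem : ∀ i, i ∈ C ↔ A i 0 = 1 := fun i => by simp [hC]
    have hzero : ∀ i, i ∉ C → A i 0 = 0 := fun i hi =>
      (h01 i 0).resolve_right fun h => hi ((hmem i).2 h)
    -- Rows outside `C` contribute the same factor before and after deleting column `0`.
    have hsplit : ∀ p ∈ C, ∏ i ∈ univ.erase p, rowFactor (r i)
        = (∏ i ∈ C.erase p, rowFactor (r i)) * ∏ i ∈ Cᶜ, rowFactor (r i) := fun p hp => by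
      rw [← Finset.prod_union]
      · congr 1
        ext i
        by_cases hi : i ∈ C
        · simp [hi]
        · have : i ≠ p := fun h => hi (h ▸ hp)
          simp [hi, this]
      · exact (disjoint_compl_right).mono_left (Finset.erase_subset _ _)
    calc (A.permanent : ℝ)
        = ∑ p, (A p 0 : ℝ) *
          ((A.submatrix (fun k : Fin n => Equiv.swap 0 p k.succ) Fin.succ).permanent : ℝ) := by
          rw [permanent_succ_column_zero]
          push_cast
          rfl
      _ ≤ ∑ p, (A p 0 : ℝ) * ∏ i ∈ univ.erase p, rowFactor (r i) := by
          refine Finset.sum_le_sum fun p _ => mul_le_mul_of_nonneg_left ?_ (Nat.cast_nonneg _)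
          rw [← prod_swap_succ]
          exact permanent_le_prod_rowFactor n _ fun i j => h01 _ _
      _ = ∑ p ∈ C, ∏ i ∈ univ.erase p, rowFactor (r i) := by
          rw [← Finset.sum_subset (Finset.subset_univ C)]
          · refine Finset.sum_congr rfl fun p hp => ?_
            rw [(hmem p).1 hp, Nat.cast_one, one_mul]
          · intro p _ hp
            rw [hzero p hp, Nat.cast_zero, zero_mul]
      _ = (∑ p ∈ C, ∏ i ∈ C.erase p, rowFactor (r i)) * ∏ i ∈ Cᶜ, rowFactor (r i) := by
          rw [Finset.sum_mul]
          exact Finset.sum_congr rfl hsplit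
      _ ≤ (∏ i ∈ C, rowFactor (r i + 1)) * ∏ i ∈ Cᶜ, rowFactor (r i) :=
          mul_le_mul_of_nonneg_right (sum_prod_erase_rowFactor_le C r)
            (Finset.prod_nonneg fun _ _ => rowFactor_nonneg _)
      _ = ∏ i, rowFactor (∑ j, A i j) := by
          rw [← Finset.prod_mul_prod_compl C]
          congr 1
          · refine Finset.prod_congr rfl fun i hi => ?_
            rw [Fin.sum_univ_succ, (hmem i).1 hi, add_comm]
          · refine Finset.prod_congr rfl fun i hi => ?_
            rw [Fin.sum_univ_succ, hzero i (Finset.mem_compl.1 hi), zero_add]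

/-- For every `n ≥ 1` and every `n × n` 0-1 matrix `A` with all row sums at least 1,
`per(A) ≤ ∏ i, g(r i) / e`. -/
theorem permanent_le_prod_bregmanG (n : ℕ) (hn : 1 ≤ n)
    (A : Matrix (Fin n) (Fin n) ℕ)
    (h01 : ∀ i j, A i j = 0 ∨ A i j = 1)
    (hrow : ∀ i, 1 ≤ ∑ j, A i j) :
    (A.permanent : ℝ) ≤ ∏ i, bregmanG (∑ j, A i j) / Real.exp 1 := by
  refine (permanent_le_prod_rowFactor n A h01).trans_eq (Finset.prod_congr rfl fun i _ => ?_)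
  obtain ⟨a, ha⟩ := Nat.exists_eq_add_of_le' (hrow i)
  rw [ha, rowFactor]
end

section
/- Let c ≥ 1 be an integer and let a_1, …, a_c be real numbers with a_k ≥ e for every k. Then e · (Π_{k=1}^c p(a_k)) · (Σ_{k=1}^c 1/a_k) ≤ 1, where p(x) := 1/(1 + 1/x + 1/(2x²) + (3/5)/x³). -/
/-! With `y = 1 / x ∈ (0, 1]`, the denominator of `pFun x` is `1 + y + y²/2 + (3/5) y³`, which
dominates `exp y` by the Taylor bound of order three; hence `pFun x ≤ exp (-(1 / x))`. Writing
`S = ∑ 1 / aₖ`, the left-hand side is thus at most `e · exp (-S) · S`, and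
`S ≤ exp (S - 1)` gives the claim. -/

/-- `p(x) = 1/(1 + 1/x + 1/(2x²) + (3/5)/x³)`. -/
noncomputable def pFun (x : ℝ) : ℝ := 1 / (1 + 1 / x + 1 / (2 * x ^ 2) + 0.6 / x ^ 3)

lemma pFun_nonneg {x : ℝ} (hx : 0 ≤ x) : 0 ≤ pFun x := by
  unfold pFun
  positivity

lemma pFun_le_exp {x : ℝ} (hx : 1 ≤ x) : pFun x ≤ Real.exp (-(1 / x)) := by
  have hx0 : 0 < x := by linarith
  have hy0 : 0 ≤ 1 / x := by positivity
  have hy1 : 1 / x ≤ 1 := by rw [div_le_one hx0]; exact hx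
  have h := Real.exp_bound' hy0 hy1 (n := 3) (by norm_num)
  norm_num [Finset.sum_range_succ, Nat.factorial] at h
  unfold pFun
  rw [Real.exp_neg, ← one_div (Real.exp _)]
  apply one_div_le_one_div_of_le (Real.exp_pos _)
  have e1 : 1 / (2 * x ^ 2) = x⁻¹ ^ 2 / 2 := by field_simp
  have e2 : 0.6 / x ^ 3 = 0.6 * x⁻¹ ^ 3 := by field_simp
  have h3 : 0 ≤ (x ^ 3)⁻¹ := by positivity
  rw [e1, e2, one_div]
  norm_num at h ⊢
  linarith

/-- For `c ≥ 1` and reals `a₁, …, a_c` each at least `e`,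
`e · (∏ p(aₖ)) · (∑ 1/aₖ) ≤ 1`. -/
theorem exp_mul_prod_pFun_mul_sum_inv_le_one (c : ℕ) (hc : 1 ≤ c)
    (a : Fin c → ℝ) (ha : ∀ k, Real.exp 1 ≤ a k) :
    Real.exp 1 * (∏ k, pFun (a k)) * (∑ k, 1 / a k) ≤ 1 := by
  have h1 : ∀ k, 1 ≤ a k := fun k => (Real.one_le_exp zero_le_one).trans (ha k)
  have hP : ∏ k, pFun (a k) ≤ Real.exp (-∑ k, 1 / a k) := by
    rw [← Finset.sum_neg_distrib, Real.exp_sum]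
    exact Finset.prod_le_prod (fun k _ => pFun_nonneg (zero_le_one.trans (h1 k)))
      (fun k _ => pFun_le_exp (h1 k))
  have hS0 : 0 ≤ ∑ k, 1 / a k :=
    Finset.sum_nonneg fun k _ => one_div_nonneg.2 (zero_le_one.trans (h1 k))
  generalize ∑ k, 1 / a k = S at *
  have hS : S ≤ Real.exp (S - 1) := by linarith [Real.add_one_le_exp (S - 1)]
  calc Real.exp 1 * (∏ k, pFun (a k)) * S
      ≤ Real.exp 1 * Real.exp (-S) * Real.exp (S - 1) := by gcongr
    _ = 1 := by
      rw [← Real.exp_add, ← Real.exp_add, ← Real.exp_zero]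
      congr 1
      ring
end

section
/- For every real number a ≥ e and every integer c ≥ 1, e · p(a)^c · (c/a) ≤ 1, where p(x) := 1/(1 + 1/x + 1/(2x²) + (3/5)/x³). -/
theorem pFun_le_exp_neg (a : ℝ) (ha : 1 ≤ a) : pFun a ≤ Real.exp (-(1 / a)) := by
  have ha0 : 0 < a := by linarith
  have hx0 : 0 < 1 / a := by positivity
  have hx1 : 1 / a ≤ 1 := by rw [div_le_one ha0]; exact ha
  have h := Real.exp_bound' hx0.le hx1 (n := 3) (by norm_num)
  norm_num [Finset.sum_range_succ, Nat.factorial] at h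
  have h3 : 0 < (a ^ 3)⁻¹ := by positivity
  have e : 1 + 1 / a + 1 / (2 * a ^ 2) + 0.6 / a ^ 3
      = 1 + a⁻¹ + (a ^ 2)⁻¹ / 2 + 0.6 * (a ^ 3)⁻¹ := by
    field_simp
  rw [pFun, e, Real.exp_neg, one_div, one_div]
  apply inv_anti₀ (Real.exp_pos _)
  linarith

/-- For every real `a ≥ e` and integer `c ≥ 1`, `e · p(a)^c · (c/a) ≤ 1`. -/
theorem exp_mul_pFun_pow_mul_div_le_one (a : ℝ) (ha : Real.exp 1 ≤ a)
    (c : ℕ) (hc : 1 ≤ c) :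
    Real.exp 1 * pFun a ^ c * ((c : ℝ) / a) ≤ 1 := by
  have h1 : 1 ≤ a := by linarith [Real.add_one_le_exp (1 : ℝ)]
  have ha0 : 0 < a := by linarith
  have hp : 0 ≤ pFun a := by unfold pFun; positivity
  have ht : (c : ℝ) / a ≤ Real.exp ((c : ℝ) / a - 1) := by
    linarith [Real.add_one_le_exp ((c : ℝ) / a - 1)]
  calc Real.exp 1 * pFun a ^ c * ((c : ℝ) / a)
      ≤ Real.exp 1 * Real.exp (-(1 / a)) ^ c * Real.exp ((c : ℝ) / a - 1) := by
        gcongr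
        exact pFun_le_exp_neg a h1
    _ = 1 := by
        rw [← Real.exp_nat_mul, ← Real.exp_add, ← Real.exp_add, Real.exp_eq_one_iff]
        ring
end

section
/- Let A be an n×n matrix with entries in {0,1} such that every row sum and every column sum of A equals Δ, where Δ ≥ 1. Then per(A) ≥ Δⁿ · n!/nⁿ, and consequently per(A) ≥ (Δ/e)ⁿ · √(2πn). -/
/-!
This is Gurvits' proof of van der Waerden's inequality. The permanent of `B` is the coefficient of
`x₁ ⋯ xₙ` in the product `p` of the linear forms `∑ j, B i j * x j`, and by the weighted AM-GM
inequality `p x ≥ s ^ n * x₁ ⋯ xₙ` on the positive orthant when all line sums are `s`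
(`prod_le_prod_linear`).

Extract one variable at a time, replacing a homogeneous polynomial `q` of degree `d` in `d`
variables by `∂q/∂x₀` at `x₀ = 0`. For fixed positive values of the other variables, `q` is a
univariate polynomial with negative real roots, and `Polynomial.norm_coeff_one_ge` shows that the
step costs at most a factor `((d - 1) / d) ^ (d - 1)`. These factors multiply to `n! / n ^ n`
(`StrongStable.capacity_bound`).

Real-rootedness comes from a half-plane property (`StrongStable`), kept along the extraction by
the Gauss–Lucas theorem. If `B` has positive entries, `p` has no zeros in the closed right
half-space except at purely imaginary points. This strong form of stability passes to the
derivative directly, without Hurwitz's theorem; general nonnegative matrices then follow by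
continuity. The second bound is Stirling's lower bound for `n!`.
-/

/-! ### Univariate polynomials -/

/-- A form of the AM-GM inequality for the numbers `1 + t / r`: each factor is bounded by
`y ≤ m * exp (y / m - 1)`, which is sharp at `y = m`. The exponential is `1` when `m` is the mean
of the `1 + t / r`. -/
theorem Multiset.prod_add_le_exp (t m : ℝ) (ht : 0 < t) (hm : 0 < m) (M : Multiset ℝ)
    (hM : ∀ r ∈ M, 0 < r) :
    (M.map (fun r => t + r)).prod ≤ M.prod * m ^ M.card *
      Real.exp ((M.card + t * (M.map (fun r => r⁻¹)).sum) / m - M.card) := by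
  induction M using Multiset.induction_on with
  | empty => simp
  | cons r M ih =>
    have hr : 0 < r := hM r (by simp)
    have hM' : ∀ r ∈ M, 0 < r := fun s hs => hM s (by simp [hs])
    have ih := ih hM'
    have h1 : t + r ≤ r * m * Real.exp ((1 + t * r⁻¹) / m - 1) := by
      have := Real.add_one_le_exp ((1 + t * r⁻¹) / m - 1)
      calc t + r = r * m * ((1 + t * r⁻¹) / m - 1 + 1) := by field_simp; ring
        _ ≤ _ := by gcongr
    have h0 : 0 ≤ (M.map (fun r => t + r)).prod := by
      apply Multiset.prod_nonneg
      intro a ha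
      obtain ⟨s, hs, rfl⟩ := Multiset.mem_map.1 ha
      linarith [hM' s hs]
    have := mul_le_mul h1 ih h0 (by positivity)
    simp only [Multiset.map_cons, Multiset.prod_cons, Multiset.card_cons, Multiset.sum_cons]
    refine this.trans_eq ?_
    have e : (((M.card + 1 : ℕ) : ℝ) + t * (r⁻¹ + (M.map (fun r => r⁻¹)).sum)) / m
        - ((M.card + 1 : ℕ) : ℝ) = ((1 + t * r⁻¹) / m - 1) +
          ((M.card + t * (M.map (fun r => r⁻¹)).sum) / m - M.card) := by
      push_cast; field_simp; ring
    rw [e, Real.exp_add]; ring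

/-- By Gauss–Lucas, the roots of `f'` lie in the open left half-plane too, so `f' 0 ≠ 0`. -/
theorem Polynomial.coeff_one_ne_zero_of_roots_re_neg (f : Polynomial ℂ) (hd : f.natDegree ≠ 0)
    (h : ∀ z : ℂ, f.IsRoot z → z.re < 0) : f.coeff 1 ≠ 0 := by
  intro hc
  have hder : f.derivative.eval 0 = 0 := by
    rw [← Polynomial.coeff_zero_eq_eval_zero, Polynomial.coeff_derivative]; simp [hc]
  have hne : f.derivative ≠ 0 := fun h => hd (Polynomial.derivative_eq_zero.1 h)
  have h0 := Polynomial.rootSet_derivative_subset_convexHull_rootSet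
    (Polynomial.natDegree_pos_iff_degree_pos.1 (Nat.pos_of_ne_zero hd))
    ((Polynomial.mem_rootSet.2 ⟨hne, by simpa using hder⟩ : (0 : ℂ) ∈ f.derivative.rootSet ℂ))
  have hsub : f.rootSet ℂ ⊆ {z : ℂ | z.re < 0} := fun z hz =>
    h z (by simpa using (Polynomial.mem_rootSet.1 hz).2)
  have := convexHull_min hsub (convex_halfSpace_re_lt 0) h0
  simp at this

/-- Gurvits' univariate inequality: if `f` has degree `d = k + 2` and only negative real roots, then
`|f' 0| ≥ ((d - 1) / d) ^ (d - 1) * inf_{t > 0} |f t| / t`. Only norms enter, so the leading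
coefficient may be complex. -/
theorem Polynomial.norm_coeff_one_ge (f : Polynomial ℂ) (k : ℕ) (hd : f.natDegree = k + 2)
    (h : ∀ z : ℂ, f.IsRoot z → ∃ r : ℝ, 0 < r ∧ z = -r) (K : ℝ)
    (hK : ∀ t : ℝ, 0 < t → K * t ≤ ‖f.eval (t : ℂ)‖) :
    K * ((k + 1 : ℝ) / (k + 2)) ^ (k + 1) ≤ ‖f.coeff 1‖ := by
  have hf : f.Splits := IsAlgClosed.splits f
  have hcard := hf.natDegree_eq_card_roots
  obtain ⟨M, hMpos, hM⟩ : ∃ M : Multiset ℝ, (∀ r ∈ M, 0 < r) ∧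
      f.roots = M.map (fun r : ℝ => -(r : ℂ)) := by
    refine ⟨f.roots.map (fun z => -z.re), ?_, ?_⟩
    · intro r hr
      obtain ⟨z, hz, rfl⟩ := Multiset.mem_map.1 hr
      obtain ⟨r, hpos, rfl⟩ := h z (Polynomial.isRoot_of_mem_roots hz)
      rw [Complex.neg_re, Complex.ofReal_re, neg_neg]
      exact hpos
    · rw [Multiset.map_map]
      conv_lhs => rw [← Multiset.map_id f.roots]
      apply Multiset.map_congr rfl
      intro z hz
      obtain ⟨r, hr, rfl⟩ := h z (Polynomial.isRoot_of_mem_roots hz)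
      simp
  have hMc : M.card = k + 2 := by rw [← hd, hcard, hM, Multiset.card_map]
  set S := (M.map (fun r => r⁻¹)).sum with hS
  have hSpos : 0 < S := by
    obtain ⟨a, ha⟩ := Multiset.card_pos_iff_exists_mem.1 (by omega : 0 < M.card)
    obtain ⟨N, rfl⟩ := Multiset.exists_cons_of_mem ha
    rw [hS, Multiset.map_cons, Multiset.sum_cons]
    apply add_pos_of_pos_of_nonneg (inv_pos.2 (hMpos a (by simp)))
    apply Multiset.sum_nonneg
    intro b hb
    obtain ⟨s, hs, rfl⟩ := Multiset.mem_map.1 hb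
    exact (inv_pos.2 (hMpos s (by simp [hs]))).le
  have heval : ∀ t : ℝ, f.eval (t : ℂ) =
      f.leadingCoeff * (((M.map (fun r => t + r)).prod : ℝ) : ℂ) := by
    intro t
    rw [hf.eval_eq_prod_roots, hM, Multiset.map_map]
    congr 1
    change _ = Complex.ofRealHom _
    rw [map_multiset_prod, Multiset.map_map]
    congr 1
    apply Multiset.map_congr rfl
    intro r _
    simp
  have h0 : f.eval 0 = f.leadingCoeff * ((M.prod : ℝ) : ℂ) := by
    simpa using heval 0
  have hne : f.eval 0 ≠ 0 := fun h0 => by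
    obtain ⟨r, hr, h⟩ := h 0 h0
    have : r = 0 := by simpa using h
    exact hr.ne' this
  have hprod : 0 < M.prod := Multiset.prod_pos (by simpa using hMpos)
  have hc1 : f.coeff 1 = f.eval 0 * (S : ℂ) := by
    have key := hf.eval_derivative_div_eval_of_ne_zero hne
    have : f.coeff 1 = f.derivative.eval 0 := by
      rw [← Polynomial.coeff_zero_eq_eval_zero, Polynomial.coeff_derivative]; simp
    rw [this, (div_eq_iff hne).1 key, mul_comm]
    congr 1
    rw [hM, Multiset.map_map]
    change _ = Complex.ofRealHom _
    rw [map_multiset_sum, Multiset.map_map]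
    congr 1
    apply Multiset.map_congr rfl
    intro r _
    simp
  rw [hc1, norm_mul, h0, norm_mul, Complex.norm_real, Complex.norm_real,
    Real.norm_of_nonneg hprod.le, Real.norm_of_nonneg hSpos.le]
  -- AM-GM gives `‖f t‖ ≤ ‖f 0‖ * (1 + t * S / d) ^ d` with `d = k + 2`, and `‖f.coeff 1‖` is
  -- `‖f 0‖ * S`. This `t` minimises `(1 + t * S / d) ^ d / t`.
  set t : ℝ := (k + 2) / (S * (k + 1)) with ht
  have htpos : 0 < t := by positivity
  have h1 := hK t htpos
  rw [heval, norm_mul, Complex.norm_real, Real.norm_of_nonneg (Multiset.prod_nonneg (by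
    intro a ha
    obtain ⟨s, hs, rfl⟩ := Multiset.mem_map.1 ha
    linarith [hMpos s hs]))] at h1
  have h2 := Multiset.prod_add_le_exp t ((k + 2) / (k + 1)) htpos (by positivity) M hMpos
  rw [← hS, hMc] at h2
  have e : (((k + 2 : ℕ) : ℝ) + t * S) / ((k + 2) / (k + 1)) - ((k + 2 : ℕ) : ℝ) = 0 := by
    rw [ht]; push_cast; field_simp; ring
  rw [e, Real.exp_zero, mul_one] at h2
  have h3 : K * t ≤ ‖f.leadingCoeff‖ * (M.prod * ((k + 2) / (k + 1)) ^ (k + 2)) :=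
    h1.trans (by gcongr)
  have h4 := mul_le_mul_of_nonneg_right h3
    (by positivity : 0 ≤ S * ((k + 1 : ℝ) / (k + 2)) ^ (k + 2))
  have e1 : K * t * (S * ((k + 1 : ℝ) / (k + 2)) ^ (k + 2)) =
      K * ((k + 1 : ℝ) / (k + 2)) ^ (k + 1) := by
    rw [ht, pow_succ _ (k + 1)]; field_simp
  have e2 : ((k + 2 : ℝ) / (k + 1)) ^ (k + 2) * ((k + 1 : ℝ) / (k + 2)) ^ (k + 2) = 1 := by
    rw [← mul_pow]
    rw [div_mul_div_cancel₀ (by positivity), div_self (by positivity), one_pow]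
  rw [e1] at h4
  calc _ ≤ _ := h4
    _ = ‖f.leadingCoeff‖ * M.prod * S *
      (((k + 2 : ℝ) / (k + 1)) ^ (k + 2) * ((k + 1 : ℝ) / (k + 2)) ^ (k + 2)) := by ring
    _ = _ := by rw [e2, mul_one]

/-! ### Strongly stable polynomials -/

open MvPolynomial in
theorem MvPolynomial.IsHomogeneous.eval_smul' {σ : Type*} {q : MvPolynomial σ ℂ} {d : ℕ}
    (hq : q.IsHomogeneous d) (c : ℂ) (x : σ → ℂ) :
    eval (fun i => c * x i) q = c ^ d * eval x q := by
  rw [eval_eq, eval_eq, Finset.mul_sum]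
  refine Finset.sum_congr rfl fun m hm => ?_
  have : m.degree = d := by
    by_contra h
    exact (mem_support_iff.1 hm) (hq.coeff_eq_zero h)
  simp_rw [mul_pow, Finset.prod_mul_distrib]
  rw [Finset.prod_pow_eq_pow_sum, show ∑ i ∈ m.support, m i = d from this]
  ring

/-- A polynomial is strongly stable if it has no zeros in the closed right half-space apart from
points all of whose coordinates are purely imaginary. Allowing some coordinates on the imaginary
axis makes the class closed under `∂/∂x₀` at `x₀ = 0` with no limiting argument. -/
def StrongStable {σ : Type*} (q : MvPolynomial σ ℂ) : Prop :=
  ∀ z : σ → ℂ, (∀ i, 0 ≤ (z i).re) → (∃ i, 0 < (z i).re) → MvPolynomial.eval z q ≠ 0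

open MvPolynomial in
/-- Viewed as a polynomial in the first variable, `q` has full degree `d`: the coefficient of
`X 0 ^ d` is the value of `q` at `(1, 0, …, 0)`, which is nonzero by strong stability. -/
theorem StrongStable.natDegree_slice {k d : ℕ} {q : MvPolynomial (Fin (k + 1)) ℂ}
    (hq : q.IsHomogeneous d) (hs : StrongStable q) (x : Fin k → ℂ) :
    ((finSuccEquiv ℂ k q).map (eval x)).natDegree = d := by
  have hle : (finSuccEquiv ℂ k q).natDegree ≤ d :=
    (natDegree_finSuccEquiv q).trans_le ((degreeOf_le_totalDegree q 0).trans hq.totalDegree_le)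
  have hc := hq.finSuccEquiv_coeff_isHomogeneous d 0 (add_zero d)
  have hC := totalDegree_eq_zero_iff_eq_C.1 ((totalDegree_zero_iff_isHomogeneous _).2 hc)
  apply le_antisymm (Polynomial.natDegree_map_le.trans hle)
  apply Polynomial.le_natDegree_of_ne_zero
  rw [Polynomial.coeff_map, hC, eval_C]
  intro h0
  have h1 : eval (Fin.cons 1 0 : Fin (k + 1) → ℂ) q ≠ 0 := by
    apply hs
    · intro i
      refine Fin.cases ?_ (fun j => ?_) i <;> simp
    · exact ⟨0, by simp⟩
  apply h1
  rw [eval_eq_eval_mv_eval', Polynomial.eval_eq_sum_range'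
    (Nat.lt_succ_of_le (Polynomial.natDegree_map_le.trans hle))]
  apply Finset.sum_eq_zero
  intro i hi
  have hi' : i ≤ d := Nat.lt_succ_iff.1 (Finset.mem_range.1 hi)
  rw [Polynomial.coeff_map]
  rcases hi'.eq_or_lt with rfl | hlt
  · rw [hC, eval_C, h0, zero_mul]
  · have := (hq.finSuccEquiv_coeff_isHomogeneous i (d - i) (by omega)).eval_smul' 0 0
    simp only [Pi.zero_apply, mul_zero, zero_pow (by omega : d - i ≠ 0), zero_mul] at this
    rw [show (0 : Fin k → ℂ) = fun _ => 0 from rfl, this, zero_mul]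

open MvPolynomial in
/-- Strong stability is preserved by `q ↦ ∂q/∂x₀` at `x₀ = 0`, which is the coefficient of the
first power of the first variable. -/
theorem StrongStable.coeff_one {k d : ℕ} (hd : d ≠ 0) {q : MvPolynomial (Fin (k + 1)) ℂ}
    (hq : q.IsHomogeneous d) (hs : StrongStable q) :
    StrongStable ((finSuccEquiv ℂ k q).coeff 1) := by
  rintro z hz ⟨i, hi⟩
  rw [← Polynomial.coeff_map]
  apply Polynomial.coeff_one_ne_zero_of_roots_re_neg
  · rwa [hs.natDegree_slice hq]
  · intro w hw
    by_contra! hw0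
    rw [Polynomial.IsRoot, ← eval_eq_eval_mv_eval'] at hw
    refine hs _ ?_ ⟨i.succ, ?_⟩ hw
    · intro j
      refine Fin.cases ?_ (fun j => ?_) j
      · simpa using hw0
      · simpa using hz j
    · simpa using hi

open MvPolynomial in
/-- With the other variables fixed at positive reals, `q` has only negative real roots in the first
variable. -/
theorem StrongStable.root_neg {k d : ℕ} {q : MvPolynomial (Fin (k + 2)) ℂ}
    (hq : q.IsHomogeneous d) (hs : StrongStable q) (x : Fin (k + 1) → ℝ) (hx : ∀ i, 0 < x i)
    (w : ℂ) (hw : eval (Fin.cons w (fun i => (x i : ℂ)) : Fin (k + 2) → ℂ) q = 0) :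
    ∃ r : ℝ, 0 < r ∧ w = -r := by
  have hre : w.re < 0 := by
    by_contra! hw0
    refine hs _ ?_ ⟨(0 : Fin (k + 1)).succ, ?_⟩ hw
    · intro j
      refine Fin.cases ?_ (fun j => ?_) j
      · simpa using hw0
      · simpa using (hx j).le
    · simpa using hx 0
  have him : w.im = 0 := by
    by_contra hb
    -- Multiplication by `1 + (w.re / w.im) * I` moves `w` onto the imaginary axis and keeps the
    -- positive reals in the open right half-plane.
    have h := hq.eval_smul' ⟨1, w.re / w.im⟩
      (Fin.cons w (fun i => (x i : ℂ)) : Fin (k + 2) → ℂ)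
    rw [hw, mul_zero] at h
    refine hs _ ?_ ⟨(0 : Fin (k + 1)).succ, ?_⟩ h
    · intro j
      refine Fin.cases ?_ (fun j => ?_) j
      · simp [Complex.mul_re, div_mul_cancel₀ _ hb]
      · simpa [Complex.mul_re] using (hx j).le
    · simpa [Complex.mul_re] using hx 0
  exact ⟨-w.re, by linarith, by apply Complex.ext <;> simp [him]⟩

open MvPolynomial in
/-- **Gurvits' capacity inequality**: for a strongly stable homogeneous polynomial of degree
`n = k + 1` in `n` variables, the coefficient of `x₁ ⋯ xₙ` is at least `n! / n ^ n` times the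
capacity `inf_{x > 0} |q x| / (x₁ ⋯ xₙ)`. -/
theorem StrongStable.capacity_bound (k : ℕ) (q : MvPolynomial (Fin (k + 1)) ℂ)
    (hq : q.IsHomogeneous (k + 1)) (hs : StrongStable q) (K : ℝ)
    (hK : ∀ x : Fin (k + 1) → ℝ, (∀ i, 0 < x i) →
      K * ∏ i, x i ≤ ‖eval (fun i => (x i : ℂ)) q‖) :
    K * ((k + 1).factorial / (k + 1 : ℝ) ^ (k + 1)) ≤
      ‖coeff (Finsupp.equivFunOnFinite.symm fun _ => 1) q‖ := by
  induction k generalizing K with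
  | zero =>
    have h := hK (fun _ => 1) (fun _ => one_pos)
    have e : eval (fun _ => ((1 : ℝ) : ℂ)) q =
        coeff (Finsupp.equivFunOnFinite.symm fun _ => 1) q := by
      rw [eval_eq, Finset.sum_eq_single (Finsupp.equivFunOnFinite.symm fun _ => 1)]
      · simp
      · intro m hm hne
        exfalso
        apply hne
        have hd : m.degree = 1 := by
          by_contra h
          exact (mem_support_iff.1 hm) (hq.coeff_eq_zero h)
        ext i
        rw [Finsupp.degree_eq_sum] at hd
        fin_cases i; simpa using hd
      · intro h
        simp [notMem_support_iff.1 h]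
    rw [e] at h
    simpa using h
  | succ k ih =>
    have hq1 := hq.finSuccEquiv_coeff_isHomogeneous 1 (k + 1) (by omega)
    have hs1 := hs.coeff_one (by omega) hq
    have h := ih _ hq1 hs1 (K * ((k + 1 : ℝ) / (k + 2)) ^ (k + 1)) (by
      intro x hx
      have := Polynomial.norm_coeff_one_ge
        ((finSuccEquiv ℂ (k + 1) q).map (eval fun i => (x i : ℂ))) k
        (hs.natDegree_slice hq _) (fun z hz => hs.root_neg hq x hx z (by
          rw [eval_eq_eval_mv_eval']; exact hz)) (K * ∏ i, x i) (by
        intro t ht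
        rw [← eval_eq_eval_mv_eval']
        have := hK (Fin.cons t x) (by
          intro i; refine Fin.cases ?_ (fun j => ?_) i
          · simpa using ht
          · simpa using hx j)
        rw [Fin.prod_univ_succ] at this
        simp only [Fin.cons_zero, Fin.cons_succ] at this
        have e : (fun i => ((Fin.cons t x : Fin (k + 2) → ℝ) i : ℂ)) =
            (Fin.cons (t : ℂ) (fun i => (x i : ℂ)) : Fin (k + 2) → ℂ) := by
          ext i; refine Fin.cases ?_ (fun j => ?_) i <;> simp
        rw [e] at this
        calc _ = _ := by ring
          _ ≤ _ := this)
      rw [Polynomial.coeff_map] at this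
      calc _ = _ := by ring
        _ ≤ _ := this)
    rw [finSuccEquiv_coeff_coeff] at h
    have e : (Finsupp.equivFunOnFinite.symm fun _ : Fin (k + 1) => 1).cons 1 =
        (Finsupp.equivFunOnFinite.symm fun _ : Fin (k + 1 + 1) => 1) := by
      ext i; refine Fin.cases ?_ (fun j => ?_) i <;> simp
    rw [e] at h
    refine le_of_eq_of_le ?_ h
    rw [Nat.factorial_succ (k + 1)]
    push_cast
    rw [div_pow, pow_succ _ (k + 1)]
    have : (k + 1 + 1 : ℝ) = k + 2 := by ring
    rw [this]
    field_simp

/-! ### Permanents -/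

open MvPolynomial in
theorem coeff_prod_linear {n : ℕ} (B : Matrix (Fin n) (Fin n) ℂ) :
    coeff (Finsupp.equivFunOnFinite.symm fun _ => 1)
      (∏ i, ∑ j, C (B i j) * X j) = B.permanent := by
  rw [Finset.prod_univ_sum, coeff_sum, ← Matrix.permanent_transpose, Matrix.permanent]
  have hterm : ∀ g : Fin n → Fin n, coeff (Finsupp.equivFunOnFinite.symm fun _ => 1)
      (∏ i, (C (B i (g i)) * X (g i) : MvPolynomial (Fin n) ℂ)) =
      if Function.Bijective g then ∏ i, B i (g i) else 0 := by
    intro g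
    rw [Finset.prod_mul_distrib, ← map_prod, coeff_C_mul]
    have : (∏ i, X (g i) : MvPolynomial (Fin n) ℂ) =
        monomial (∑ i, Finsupp.single (g i) 1) 1 := by
      rw [monomial_sum_one]; rfl
    rw [this, coeff_monomial]
    have hiff : (∑ i, Finsupp.single (g i) 1 = Finsupp.equivFunOnFinite.symm fun _ => 1) ↔
        Function.Bijective g := by
      rw [Finsupp.ext_iff, Function.bijective_iff_existsUnique]
      refine forall_congr' fun j => ?_
      simp only [Finsupp.coe_finsetSum, Finset.sum_apply, Finsupp.single_apply,
        Finset.sum_boole, Finsupp.equivFunOnFinite_symm_apply_apply, Nat.cast_id]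
      rw [Finset.card_eq_one, Finset.singleton_iff_unique_mem]
      simp
    simp [hiff]
  rw [Fintype.piFinset_univ, Finset.sum_congr rfl fun g _ => hterm g, ← Finset.sum_filter]
  symm
  refine Finset.sum_bij (fun σ _ => (σ : Fin n → Fin n)) ?_ ?_ ?_ ?_
  · intro σ _; exact Finset.mem_filter.2 ⟨Finset.mem_univ _, σ.bijective⟩
  · intro σ _ τ _ h; exact DFunLike.coe_injective h
  · intro g hg
    exact ⟨Equiv.ofBijective g (Finset.mem_filter.1 hg).2, Finset.mem_univ _, rfl⟩
  · intro σ _; rfl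

/-- The product of the linear forms given by the rows of `B` has capacity at least `s ^ n`: apply
the weighted AM-GM inequality, with weights `B i j / s`, to each row and use the column sums. -/
theorem prod_le_prod_linear {n : ℕ} (B : Matrix (Fin n) (Fin n) ℝ) (hB : ∀ i j, 0 < B i j)
    (s : ℝ) (hs : 0 < s) (hrow : ∀ i, ∑ j, B i j = s) (hcol : ∀ j, ∑ i, B i j = s)
    (x : Fin n → ℝ) (hx : ∀ i, 0 < x i) :
    s ^ n * ∏ j, x j ≤ ∏ i, ∑ j, B i j * x j := by
  have hi : ∀ i, s * ∏ j, x j ^ (B i j / s) ≤ ∑ j, B i j * x j := by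
    intro i
    have := Real.geom_mean_le_arith_mean_weighted Finset.univ (fun j => B i j / s) x
      (fun j _ => (div_pos (hB i j) hs).le)
      (by rw [← Finset.sum_div, hrow, div_self hs.ne']) (fun j _ => (hx j).le)
    calc _ ≤ s * ∑ j, B i j / s * x j := by gcongr
      _ = _ := by
        rw [Finset.mul_sum]
        refine Finset.sum_congr rfl fun j _ => ?_
        field_simp
  refine le_of_eq_of_le ?_ (Finset.prod_le_prod (fun i _ => ?_) (fun i _ => hi i))
  · rw [Finset.prod_mul_distrib, Finset.prod_const, Finset.card_univ, Fintype.card_fin,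
      Finset.prod_comm]
    congr 1
    refine Finset.prod_congr rfl fun j _ => ?_
    rw [← Real.rpow_sum_of_pos (hx j), ← Finset.sum_div, hcol, div_self hs.ne', Real.rpow_one]
  · exact mul_nonneg hs.le (Finset.prod_nonneg fun j _ => Real.rpow_nonneg (hx j).le _)

open MvPolynomial in
theorem permanent_ge_of_pos {n : ℕ} (hn : n ≠ 0) (B : Matrix (Fin n) (Fin n) ℝ)
    (hB : ∀ i j, 0 < B i j) (s : ℝ) (hs : 0 < s) (hrow : ∀ i, ∑ j, B i j = s)
    (hcol : ∀ j, ∑ i, B i j = s) :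
    s ^ n * (n.factorial / (n : ℝ) ^ n) ≤ B.permanent := by
  obtain ⟨k, rfl⟩ := Nat.exists_eq_succ_of_ne_zero hn
  have heval : ∀ z : Fin (k + 1) → ℂ,
      eval z (∏ i, ∑ j, C ((B i j : ℝ) : ℂ) * X j) = ∏ i, ∑ j, (B i j : ℂ) * z j := by
    intro z; simp [map_prod, map_sum]
  have h := StrongStable.capacity_bound k (∏ i, ∑ j, C ((B i j : ℝ) : ℂ) * X j)
    (by
      simpa using IsHomogeneous.prod (Finset.univ : Finset (Fin (k + 1)))
        (fun i => ∑ j, C ((B i j : ℝ) : ℂ) * X j) (fun _ => 1) fun i _ =>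
          IsHomogeneous.sum _ _ _ fun j _ => isHomogeneous_C_mul_X _ j)
    (by
      rintro z hz ⟨l, hl⟩
      rw [heval, Finset.prod_ne_zero_iff]
      intro i _ h0
      have h0 := congrArg Complex.re h0
      simp only [Complex.re_sum, Complex.re_ofReal_mul, Complex.zero_re] at h0
      have : 0 < ∑ j, B i j * (z j).re :=
        Finset.sum_pos' (fun j _ => mul_nonneg (hB i j).le (hz j))
          ⟨l, Finset.mem_univ _, mul_pos (hB i l) hl⟩
      exact this.ne' h0)
    (s ^ (k + 1)) (by
      intro x hx
      refine (prod_le_prod_linear B hB s hs hrow hcol x hx).trans ?_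
      rw [heval]
      refine le_of_eq_of_le ?_ (Complex.re_le_norm _)
      exact_mod_cast rfl)
  rw [coeff_prod_linear (fun i j => ((B i j : ℝ) : ℂ))] at h
  have e : Matrix.permanent (fun i j => ((B i j : ℝ) : ℂ)) = ((B.permanent : ℝ) : ℂ) := by
    simp [Matrix.permanent]
  have hp : 0 ≤ B.permanent :=
    Finset.sum_nonneg fun σ _ => Finset.prod_nonneg fun i _ => (hB _ _).le
  rw [e, Complex.norm_real, Real.norm_of_nonneg hp] at h
  exact_mod_cast h

/-- **Van der Waerden's inequality** for nonnegative matrices with constant line sums. Adding a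
small constant to every entry keeps the line sums constant and makes the entries positive. -/
theorem permanent_ge_of_nonneg {n : ℕ} (A : Matrix (Fin n) (Fin n) ℝ)
    (hA : ∀ i j, 0 ≤ A i j) (s : ℝ) (hs : 0 ≤ s) (hrow : ∀ i, ∑ j, A i j = s)
    (hcol : ∀ j, ∑ i, A i j = s) :
    s ^ n * (n.factorial / (n : ℝ) ^ n) ≤ A.permanent := by
  rcases eq_or_ne n 0 with rfl | hn
  · simp [Matrix.permanent]
  let B : ℝ → Matrix (Fin n) (Fin n) ℝ := fun ε i j => A i j + ε
  have hcB : Continuous fun ε => (B ε).permanent := by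
    unfold Matrix.permanent B
    fun_prop
  have hcs : Continuous fun ε : ℝ => (s + n * ε) ^ n * (n.factorial / (n : ℝ) ^ n) := by
    fun_prop
  have h1 := (hcB.tendsto 0).mono_left (nhdsWithin_le_nhds (s := Set.Ioi 0))
  have h2 := (hcs.tendsto 0).mono_left (nhdsWithin_le_nhds (s := Set.Ioi 0))
  have h := le_of_tendsto_of_tendsto h2 h1 (by
    filter_upwards [self_mem_nhdsWithin] with ε (hε : 0 < ε)
    refine permanent_ge_of_pos hn (B ε) (fun i j => add_pos_of_nonneg_of_pos (hA i j) hε) _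
      ?_ (fun i => ?_) (fun j => ?_)
    · have : (0 : ℝ) < n := by exact_mod_cast Nat.pos_of_ne_zero hn
      positivity
    · simp [B, Finset.sum_add_distrib, hrow]
    · simp [B, Finset.sum_add_distrib, hcol])
  simpa [B] using h

/-- For a Δ-regular 0-1 matrix (all row and column sums equal to `Δ ≥ 1`),
`per(A) ≥ Δⁿ · n!/nⁿ`, and consequently `per(A) ≥ (Δ/e)ⁿ · √(2πn)`. -/
theorem permanent_regular_lower_bound (n Δ : ℕ) (hΔ : 1 ≤ Δ)
    (A : Matrix (Fin n) (Fin n) ℕ)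
    (h01 : ∀ i j, A i j = 0 ∨ A i j = 1)
    (hrow : ∀ i, ∑ j, A i j = Δ)
    (hcol : ∀ j, ∑ i, A i j = Δ) :
    (Δ : ℝ) ^ n * ((n.factorial : ℝ) / (n : ℝ) ^ n) ≤ (A.permanent : ℝ) ∧
    ((Δ : ℝ) / Real.exp 1) ^ n * Real.sqrt (2 * Real.pi * n) ≤ (A.permanent : ℝ) := by
  have h : (Δ : ℝ) ^ n * ((n.factorial : ℝ) / (n : ℝ) ^ n) ≤ (A.permanent : ℝ) := by
    have := permanent_ge_of_nonneg (fun i j => (A i j : ℝ)) (fun i j => Nat.cast_nonneg _) Δ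
      (Nat.cast_nonneg _) (fun i => by exact_mod_cast hrow i) (fun j => by exact_mod_cast hcol j)
    refine this.trans_eq ?_
    simp [Matrix.permanent]
  refine ⟨h, le_trans ?_ h⟩
  have hn : (0 : ℝ) < (n : ℝ) ^ n := by
    rcases eq_or_ne n 0 with rfl | hn
    · simp
    · positivity
  calc ((Δ : ℝ) / Real.exp 1) ^ n * Real.sqrt (2 * Real.pi * n)
      = (Δ : ℝ) ^ n * ((Real.sqrt (2 * Real.pi * n) * (n / Real.exp 1) ^ n) / (n : ℝ) ^ n) := by
        rw [div_pow, div_pow]; field_simp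
    _ ≤ _ := by
        gcongr
        exact Stirling.le_factorial_stirling n
end

section
/- Let A be an n×n matrix with entries in {0,1} such that every row sum and every column sum of A equals Δ, where Δ ≥ 2, and let M̃(A) := (g(Δ)/e)ⁿ. Then M̃(A)/per(A) ≤ (1/√(2πn)) · exp((n/Δ)(0.5 ln Δ + 1.65)). -/
section Permanent

open MvPolynomial

/-! ### Stable polynomials and their linear coefficients -/

/-- The polynomial `p(t, z)` in the first variable `t`, the other variables being specialised to `z`. -/
noncomputable def slice {S : Type*} [CommRing S] [Algebra ℝ S] {k : ℕ}
    (p : MvPolynomial (Fin (k + 1)) ℝ) (z : Fin k → S) : Polynomial S :=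
  (finSuccEquiv ℝ k p).map (aeval z : MvPolynomial (Fin k) ℝ →ₐ[ℝ] S).toRingHom

/-- Polynomials in `k` variables, homogeneous of degree `k`, that have no zero `z` with all real parts
nonnegative and at least one of them positive, and that are positive at nonzero
nonnegative real points. Excluding zeros on the boundary too, except at purely imaginary points, makes
the class closed under `linCoeff` without a limiting argument. -/
structure PosStable (k : ℕ) (p : MvPolynomial (Fin k) ℝ) : Prop where
  hom : p.IsHomogeneous k
  stable : ∀ z : Fin k → ℂ, (∀ i, 0 ≤ (z i).re) → (∃ i, 0 < (z i).re) → aeval z p ≠ 0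
  pos : ∀ x : Fin k → ℝ, (∀ i, 0 ≤ x i) → (∃ i, 0 < x i) → 0 < aeval x p

/-- The coefficient of the first variable to the power one, i.e. `∂p/∂t` at `t = 0`, as a polynomial
in the remaining variables. -/
noncomputable def linCoeff {k : ℕ} (p : MvPolynomial (Fin (k + 1)) ℝ) : MvPolynomial (Fin k) ℝ :=
  (finSuccEquiv ℝ k p).coeff 1

section
variable {S : Type*} [CommRing S] [Algebra ℝ S] {k : ℕ}

lemma slice_eval (p : MvPolynomial (Fin (k + 1)) ℝ) (z : Fin k → S) (t : S) :
    (slice p z).eval t = aeval (Fin.cons t z : Fin (k + 1) → S) p := by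
  unfold slice
  induction p using MvPolynomial.induction_on with
  | C a => simp [finSuccEquiv_apply]
  | add p q hp hq => simp only [map_add, Polynomial.map_add, Polynomial.eval_add, hp, hq]
  | mul_X p i hp =>
    rw [map_mul, Polynomial.map_mul, Polynomial.eval_mul, hp, map_mul]
    congr 1
    refine Fin.cases ?_ (fun j => ?_) i <;> simp [finSuccEquiv_X_zero, finSuccEquiv_X_succ]

lemma slice_coeff_one (p : MvPolynomial (Fin (k + 1)) ℝ) (z : Fin k → S) :
    (slice p z).coeff 1 = aeval z (linCoeff p) := by
  simp [slice, linCoeff, Polynomial.coeff_map]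

lemma aeval_smul_of_hom {n : ℕ} {p : MvPolynomial (Fin k) ℝ} (hp : p.IsHomogeneous n)
    (c : S) (z : Fin k → S) : aeval (fun i => c * z i) p = c ^ n * aeval z p := by
  rw [aeval_def, aeval_def, eval₂_eq', eval₂_eq', Finset.mul_sum]
  refine Finset.sum_congr rfl fun d hd => ?_
  have h : ∑ i, d i = n := by
    have := hp (mem_support_iff.1 hd)
    rw [← this, Finsupp.weight_apply, Finsupp.sum_fintype _ _ (by simp)]; simp
  simp_rw [mul_pow, Finset.prod_mul_distrib, Finset.prod_pow_eq_pow_sum, h]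
  ring

lemma slice_natDegree_le {p : MvPolynomial (Fin (k + 1)) ℝ} (hp : p.IsHomogeneous (k + 1))
    (z : Fin k → S) : (slice p z).natDegree ≤ k + 1 := by
  refine Polynomial.natDegree_map_le.trans ?_
  rw [natDegree_finSuccEquiv]
  exact (degreeOf_le_totalDegree _ _).trans hp.totalDegree_le

/-- The coefficient of `t ^ (k + 1)` has degree zero, hence does not depend on `z`, and is the value
of `p` at the first basis vector. -/
lemma slice_coeff_top {p : MvPolynomial (Fin (k + 1)) ℝ} (hp : p.IsHomogeneous (k + 1))
    (z : Fin k → S) : (slice p z).coeff (k + 1) = aeval (Fin.cons 1 0 : Fin (k + 1) → S) p := by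
  rw [← slice_eval, Polynomial.eval_eq_sum_range' (Nat.lt_succ_of_le (slice_natDegree_le hp 0)),
    Finset.sum_range_succ, Finset.sum_eq_zero, zero_add, one_pow, mul_one]
  · have h := hp.finSuccEquiv_coeff_isHomogeneous (k + 1) 0 rfl
    have h' := totalDegree_eq_zero_iff_eq_C.1 (Nat.le_zero.1 h.totalDegree_le)
    simp only [slice, Polynomial.coeff_map]
    rw [h']; simp
  · intro i hi
    have hi := Finset.mem_range.1 hi
    have h := hp.finSuccEquiv_coeff_isHomogeneous i (k + 1 - i) (by omega)
    have := aeval_smul_of_hom h (0 : S) 0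
    rw [zero_pow (by omega), zero_mul] at this
    simp only [slice, Polynomial.coeff_map]
    have h2 : (fun i => (0 : S) * (0 : Fin k → S) i) = 0 := by ext; simp
    rw [h2] at this
    simp [this]
end

lemma multiset_sum_pos (s : Multiset ℝ) (h : ∀ x ∈ s, 0 < x) (h0 : s ≠ 0) : 0 < s.sum := by
  induction s using Multiset.induction_on with
  | empty => exact absurd rfl h0
  | cons a s _ =>
    rw [Multiset.sum_cons]
    exact add_pos_of_pos_of_nonneg (h a (Multiset.mem_cons_self a s))
      (Multiset.sum_nonneg fun x hx => (h x (Multiset.mem_cons_of_mem hx)).le)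

lemma PosStable.slice_natDegree {k : ℕ} {p : MvPolynomial (Fin (k + 1)) ℝ}
    (hp : PosStable (k + 1) p) (z : Fin k → ℂ) : (slice p z).natDegree = k + 1 := by
  refine le_antisymm (slice_natDegree_le hp.hom z) (Polynomial.le_natDegree_of_ne_zero ?_)
  rw [slice_coeff_top hp.hom]
  refine hp.stable _ (fun i => ?_) ⟨0, by simp⟩
  refine Fin.cases ?_ (fun j => ?_) i <;> simp

/-- All roots `r` of `t ↦ p(t, z)` have negative real part, so the logarithmic derivative `∑ -1/r`
at `t = 0` has positive real part. -/
lemma PosStable.linCoeff_ratio {k : ℕ} {p : MvPolynomial (Fin (k + 1)) ℝ}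
    (hp : PosStable (k + 1) p) (z : Fin k → ℂ) (h0 : ∀ i, 0 ≤ (z i).re)
    (h1 : ∃ i, 0 < (z i).re) :
    0 < (aeval z (linCoeff p) / aeval (Fin.cons 0 z : Fin (k + 1) → ℂ) p).re := by
  obtain ⟨i1, hi1⟩ := h1
  have hne : ∀ t : ℂ, 0 ≤ t.re → (slice p z).eval t ≠ 0 := by
    intro t ht
    rw [slice_eval]
    refine hp.stable _ (fun i => ?_) ⟨i1.succ, by simpa using hi1⟩
    refine Fin.cases ?_ (fun j => ?_) i <;> simp [ht, h0]
  have hs := IsAlgClosed.splits (slice p z)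
  have h := hs.eval_derivative_div_eval_of_ne_zero (hne 0 (by simp))
  rw [← Polynomial.coeff_zero_eq_eval_zero, Polynomial.coeff_derivative, zero_add,
    slice_coeff_one, slice_eval] at h
  simp only [Nat.cast_zero, zero_add, mul_one] at h
  rw [h]
  have hcard : (slice p z).roots ≠ 0 := by
    rw [← Multiset.card_pos, ← hs.natDegree_eq_card_roots, hp.slice_natDegree]; omega
  have hre : ∀ s : Multiset ℂ, s.sum.re = (s.map Complex.re).sum :=
    fun s => map_multiset_sum Complex.reAddGroupHom s
  rw [hre, Multiset.map_map]
  refine multiset_sum_pos _ ?_ (by simpa using hcard)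
  intro x hx
  obtain ⟨r, hr, rfl⟩ := Multiset.mem_map.1 hx
  have hr' : r.re < 0 := by
    by_contra hcon
    exact hne r (not_lt.1 hcon) (Polynomial.isRoot_of_mem_roots hr)
  have hr0 : r ≠ 0 := by rintro rfl; simp at hr'
  have : 0 < Complex.normSq r := Complex.normSq_pos.2 hr0
  simp only [Function.comp_apply, zero_sub, one_div, inv_neg, Complex.neg_re, Complex.inv_re, neg_pos]
  exact div_neg_of_neg_of_pos hr' this

lemma aeval_ofReal {k : ℕ} (p : MvPolynomial (Fin k) ℝ) (x : Fin k → ℝ) :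
    aeval (fun i => (x i : ℂ)) p = ((aeval x p : ℝ) : ℂ) := by
  have := aeval_algebraMap_apply ℂ x p
  simpa [Function.comp_def] using this

/-- Passing to the linear coefficient in one variable preserves `PosStable`. -/
lemma PosStable.descend {k : ℕ} {p : MvPolynomial (Fin (k + 1)) ℝ}
    (hp : PosStable (k + 1) p) : PosStable k (linCoeff p) where
  hom := hp.hom.finSuccEquiv_coeff_isHomogeneous 1 k (by omega)
  stable z h0 h1 h := by
    have := hp.linCoeff_ratio z h0 h1
    simp [h] at this
  pos x h0 h1 := by
    have := hp.linCoeff_ratio (fun i => (x i : ℂ)) (by simpa using h0) (by simpa using h1)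
    have hc : (Fin.cons 0 (fun i => (x i : ℂ)) : Fin (k + 1) → ℂ) =
        fun i => (((Fin.cons 0 x : Fin (k + 1) → ℝ) i : ℝ) : ℂ) := by
      ext i; refine Fin.cases ?_ (fun j => ?_) i <;> simp
    rw [hc, aeval_ofReal, aeval_ofReal, ← Complex.ofReal_div, Complex.ofReal_re] at this
    obtain ⟨i1, hi1⟩ := h1
    have h2 : 0 < aeval (Fin.cons 0 x : Fin (k + 1) → ℝ) p := by
      refine hp.pos _ (fun i => ?_) ⟨i1.succ, by simpa using hi1⟩
      refine Fin.cases ?_ (fun j => ?_) i <;> simp [h0]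
    exact (div_pos_iff_of_pos_right h2).1 this

/-! ### The capacity inequality -/

/-- AM-GM for the factors `1 + b t`, whose mean is `1 + μ`, obtained by multiplying the tangent-line
bounds `1 + b t ≤ (1 + μ) exp ((b t - μ) / (1 + μ))`. -/
lemma prod_one_add_le (s : Multiset ℝ) (t μ : ℝ) (hμ : 0 ≤ μ) (ht : 0 ≤ t)
    (hs : ∀ b ∈ s, 0 ≤ b) (h : s.sum * t = s.card * μ) :
    (s.map fun b => 1 + b * t).prod ≤ (1 + μ) ^ s.card := by
  have key : ∀ s : Multiset ℝ, (∀ b ∈ s, 0 ≤ b) → (s.map fun b => 1 + b * t).prod ≤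
      (1 + μ) ^ s.card * Real.exp ((s.sum * t - s.card * μ) / (1 + μ)) := by
    intro s
    induction s using Multiset.induction_on with
    | empty => simp
    | cons b s ih =>
      intro hs
      have ih := ih (fun c hc => hs c (Multiset.mem_cons_of_mem hc))
      have hb : 0 ≤ b := hs b (Multiset.mem_cons_self b s)
      simp only [Multiset.map_cons, Multiset.prod_cons, Multiset.card_cons, Multiset.sum_cons]
      have h1 : 1 + b * t ≤ (1 + μ) * Real.exp ((b * t - μ) / (1 + μ)) := by
        have := Real.add_one_le_exp ((b * t - μ) / (1 + μ))
        calc 1 + b * t = (1 + μ) * ((b * t - μ) / (1 + μ) + 1) := by field_simp; ring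
          _ ≤ _ := by gcongr
      calc (1 + b * t) * (s.map fun b => 1 + b * t).prod
          ≤ ((1 + μ) * Real.exp ((b * t - μ) / (1 + μ))) *
            ((1 + μ) ^ s.card * Real.exp ((s.sum * t - s.card * μ) / (1 + μ))) := by
            refine mul_le_mul h1 ih (Multiset.prod_nonneg ?_) (by positivity)
            intro a ha
            obtain ⟨c, hc, rfl⟩ := Multiset.mem_map.1 ha
            have := hs c (Multiset.mem_cons_of_mem hc)
            positivity
        _ = _ := by
            rw [mul_mul_mul_comm, ← pow_succ', ← Real.exp_add]
            congr 2
            push_cast; ring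
  have := key s hs
  rwa [h, sub_self, zero_div, Real.exp_zero, mul_one] at this

/-- For positive real `x`, the polynomial `t ↦ p(t, x)` has only negative real roots: if `t` is off the
negative real axis, some `l` with positive real part makes `l * t` lie in the right half-plane too,
and homogeneity turns a zero at `(t, x)` into one at `(l t, l x)`. Hence it factors as
`p(0, x) ∏ (1 + b t)` with exactly `k + 2` positive `b`, whose sum gives the linear coefficient. -/
lemma PosStable.slice_real {k : ℕ} {p : MvPolynomial (Fin (k + 2)) ℝ}
    (hp : PosStable (k + 2) p) (x : Fin (k + 1) → ℝ) (hx : ∀ i, 0 < x i) :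
    ∃ s : Multiset ℝ, s.card = k + 2 ∧ (∀ b ∈ s, 0 < b) ∧
      aeval x (linCoeff p) = aeval (Fin.cons 0 x : Fin (k + 2) → ℝ) p * s.sum ∧
      ∀ t, aeval (Fin.cons t x : Fin (k + 2) → ℝ) p =
        aeval (Fin.cons 0 x : Fin (k + 2) → ℝ) p * (s.map fun b => 1 + b * t).prod := by
  set R := slice p x with hR
  have hmap : R.map (algebraMap ℝ ℂ) = slice p (fun i => (x i : ℂ)) := by
    rw [hR, slice, slice, Polynomial.map_map]
    congr 1
    ext q
    · simp
    · simp
  have hroot : ∀ t : ℂ, (R.map (algebraMap ℝ ℂ)).IsRoot t → ∃ r : ℝ, r < 0 ∧ (r : ℂ) = t := by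
    intro t ht
    by_contra hcon
    have ht1 : 0 < ‖t‖ + t.re ∨ t = 0 := by
      by_cases h0 : t = 0
      · exact Or.inr h0
      left
      by_contra hle
      have h1 : ‖t‖ ≤ -t.re := by linarith
      have h2 := Complex.abs_re_le_norm t
      have h3 : |t.re| = ‖t‖ := le_antisymm h2 (h1.trans (neg_le_abs _))
      have h4 : t.im = 0 := Complex.abs_re_eq_norm.1 h3
      have h5 : 0 < ‖t‖ := norm_pos_iff.2 h0
      exact hcon ⟨t.re, by linarith, Complex.ext (by simp) (by simp [h4])⟩
    rw [hmap, Polynomial.IsRoot, slice_eval] at ht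
    rcases ht1 with ht1 | rfl
    -- `l` points along the bisector of `1` and the conjugate of `t`, so both `l` and `l * t` have
    -- positive real part
    · let l : ℂ := (starRingEnd ℂ) t + ‖t‖
      have hl : 0 < l.re := by simp [l]; linarith
      have hlt : 0 ≤ (l * t).re := by
        have : l * t = ((‖t‖ ^ 2 : ℝ) : ℂ) + (‖t‖ : ℂ) * t := by
          simp only [l, add_mul, Complex.ofReal_pow, ← Complex.conj_mul']
        rw [this, Complex.add_re, Complex.ofReal_re, Complex.re_ofReal_mul]
        have := norm_nonneg t
        nlinarith
      refine hp.stable (fun i => l * (Fin.cons t (fun i => (x i : ℂ)) : Fin (k + 2) → ℂ) i)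
        (fun i => ?_) ⟨1, ?_⟩ ?_
      · refine Fin.cases ?_ (fun j => ?_) i
        · simpa using hlt
        · have := mul_pos hl (hx j)
          simpa using this.le
      · have := mul_pos hl (hx 0)
        have h1 : (1 : Fin (k + 2)) = Fin.succ 0 := rfl
        rw [h1, Fin.cons_succ]
        simpa using this
      · rw [aeval_smul_of_hom hp.hom, ht, mul_zero]
    · refine hp.stable _ (fun i => ?_) ⟨Fin.succ 0, ?_⟩ ht
      · refine Fin.cases ?_ (fun j => ?_) i
        · simp
        · simpa using (hx j).le
      · simpa using hx 0
  have hdeg : R.natDegree = k + 2 := by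
    rw [← Polynomial.natDegree_map (algebraMap ℝ ℂ), hmap, hp.slice_natDegree]
  have hsp : R.Splits := by
    refine Polynomial.Splits.of_splits_map (algebraMap ℝ ℂ) (IsAlgClosed.splits _) ?_
    intro a ha
    obtain ⟨r, _, h⟩ := hroot a (Polynomial.isRoot_of_mem_roots ha)
    exact ⟨r, h⟩
  have hneg : ∀ r ∈ R.roots, r < 0 := by
    intro r hr
    obtain ⟨r', h1, h2⟩ := hroot r ((Polynomial.isRoot_of_mem_roots hr).map)
    rwa [← Complex.ofReal_inj.1 h2]
  have h0 : R.eval 0 ≠ 0 := by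
    intro h
    have hR0 : R ≠ 0 := by rintro h; simp [h] at hdeg
    exact lt_irrefl _ (hneg 0 ((Polynomial.mem_roots hR0).2 h))
  refine ⟨R.roots.map fun r => 1 / (0 - r), ?_, ?_, ?_, ?_⟩
  · rw [Multiset.card_map, ← hsp.natDegree_eq_card_roots, hdeg]
  · intro b hb
    obtain ⟨r, hr, rfl⟩ := Multiset.mem_map.1 hb
    have := hneg r hr
    exact one_div_pos.2 (by linarith)
  · rw [← slice_coeff_one, ← slice_eval, ← hsp.eval_derivative_eq_eval_mul_sum h0,
      ← Polynomial.coeff_zero_eq_eval_zero, Polynomial.coeff_derivative]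
    simp
    rfl
  · intro t
    rw [← slice_eval, ← slice_eval, ← hR, hsp.eval_eq_prod_roots, hsp.eval_eq_prod_roots,
      mul_assoc, Multiset.map_map, ← Multiset.prod_map_mul]
    congr 2
    refine Multiset.map_congr rfl fun r hr => ?_
    have := hneg r hr
    have hr0 : r ≠ 0 := this.ne
    simp only [Function.comp_apply]
    field_simp
    ring

/-- Gurvits' inequality: a lower bound `c` on the capacity `inf p(y) / ∏ y` yields the lower bound
`c (k / (k + 1)) ^ k` on the capacity of the linear coefficient. For `k = 0` the factor is
`0 ^ 0 = 1`. -/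
lemma PosStable.cap_step {k : ℕ} {p : MvPolynomial (Fin (k + 1)) ℝ}
    (hp : PosStable (k + 1) p) (c : ℝ)
    (hc : ∀ y : Fin (k + 1) → ℝ, (∀ i, 0 < y i) → c * ∏ i, y i ≤ aeval y p)
    (x : Fin k → ℝ) (hx : ∀ i, 0 < x i) :
    c * ((k : ℝ) / (k + 1)) ^ k * ∏ i, x i ≤ aeval x (linCoeff p) := by
  rcases k with _ | k
  · have h0 : aeval (Fin.cons 0 x : Fin 1 → ℝ) p = 0 := by
      have := aeval_smul_of_hom hp.hom (0 : ℝ) (Fin.cons 0 x : Fin 1 → ℝ)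
      rw [zero_pow (by omega), zero_mul] at this
      have e : (fun i => (0 : ℝ) * (Fin.cons 0 x : Fin 1 → ℝ) i) = Fin.cons 0 x := by
        funext i
        refine Fin.cases ?_ (fun j => j.elim0) i
        simp
      exact (congrArg (fun w => aeval w p) e).symm.trans this
    have h1 := hc (Fin.cons 1 x) (fun i => by
      refine Fin.cases ?_ (fun j => j.elim0) i
      simp)
    rw [← slice_eval, Polynomial.eval_eq_sum_range'
      (Nat.lt_succ_of_le (slice_natDegree_le hp.hom x))] at h1
    rw [← slice_eval, ← Polynomial.coeff_zero_eq_eval_zero] at h0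
    simp [Finset.sum_range_succ, h0] at h1
    rw [← slice_coeff_one]
    simpa using h1
  · obtain ⟨s, hcard, hs, h1, ht⟩ := hp.slice_real x hx
    have hsum : 0 < s.sum := multiset_sum_pos s hs (by rintro rfl; simp at hcard)
    set r0 := aeval (Fin.cons 0 x : Fin (k + 2) → ℝ) p with hr0
    have hr0p : 0 < r0 := by
      refine hp.pos _ (fun i => ?_) ⟨Fin.succ 0, by simpa using hx 0⟩
      refine Fin.cases ?_ (fun j => ?_) i
      · simp
      · simpa using (hx j).le
    -- the minimiser of `(1 + S t / (k + 2)) ^ (k + 2) / t`, where `S` is the sum of `s`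
    set t : ℝ := (k + 2) / ((k + 1) * s.sum) with htdef
    have htpos : 0 < t := by positivity
    have hb := prod_one_add_le s t (1 / (k + 1)) (by positivity) htpos.le
      (fun b hb => (hs b hb).le) (by rw [hcard, htdef]; push_cast; field_simp)
    have h2 := hc (Fin.cons t x) (fun i => by
      refine Fin.cases ?_ (fun j => ?_) i
      · simpa using htpos
      · simpa using hx j)
    rw [ht t, Fin.prod_univ_succ] at h2
    simp only [Fin.cons_zero, Fin.cons_succ] at h2
    rw [h1]
    have h3 : c * (t * ∏ i, x i) ≤ r0 * (1 + 1 / ((k : ℝ) + 1)) ^ (k + 2) := by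
      rw [hcard] at hb
      exact h2.trans (by gcongr)
    have e1 : (1 + 1 / ((k : ℝ) + 1)) = (((k + 1 : ℕ) : ℝ) / ((k + 1 : ℕ) + 1))⁻¹ := by
      push_cast; field_simp
    set u : ℝ := ((k + 1 : ℕ) : ℝ) / ((k + 1 : ℕ) + 1) with hu
    have hupos : 0 < u := by positivity
    have e2 : t = (u * s.sum)⁻¹ := by
      rw [htdef, hu]; push_cast; field_simp; ring
    rw [e1, e2] at h3
    calc c * u ^ (k + 1) * ∏ i, x i
        = (c * ((u * s.sum)⁻¹ * ∏ i, x i)) * (u ^ (k + 2) * s.sum) := by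
          rw [pow_succ u (k + 1)]; field_simp
      _ ≤ (r0 * u⁻¹ ^ (k + 2)) * (u ^ (k + 2) * s.sum) := by gcongr
      _ = r0 * s.sum := by rw [inv_pow]; field_simp

/-- Iterating Gurvits' inequality down to no variables: the factors multiply to `k! / k ^ k`. -/
theorem PosStable.cap_le_coeff (k : ℕ) (p : MvPolynomial (Fin k) ℝ) (hp : PosStable k p) (c : ℝ)
    (hc : ∀ y : Fin k → ℝ, (∀ i, 0 < y i) → c * ∏ i, y i ≤ aeval y p) :
    c * (k.factorial / (k : ℝ) ^ k) ≤ p.coeff (Finsupp.equivFunOnFinite.symm fun _ => 1) := by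
  induction k generalizing c with
  | zero =>
    have h := hc 0 (fun i => i.elim0)
    have h2 := MvPolynomial.eq_C_of_isEmpty p
    rw [h2] at h ⊢
    have e : (Finsupp.equivFunOnFinite.symm fun _ => 1 : Fin 0 →₀ ℕ) = 0 := by ext i; exact i.elim0
    rw [e]
    simpa using h
  | succ k ih =>
    have := ih _ hp.descend _ (hp.cap_step c hc)
    rw [linCoeff, finSuccEquiv_coeff_coeff] at this
    have e : (Finsupp.equivFunOnFinite.symm fun _ => 1 : Fin k →₀ ℕ).cons 1 =
        (Finsupp.equivFunOnFinite.symm fun _ => 1 : Fin (k + 1) →₀ ℕ) := by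
      ext i; refine Fin.cases ?_ (fun j => ?_) i <;> simp
    rw [e] at this
    refine le_of_eq_of_le ?_ this
    rw [Nat.factorial_succ]
    rcases Nat.eq_zero_or_pos k with rfl | hk
    · simp
    · rw [div_pow, pow_succ]; push_cast; field_simp

/-! ### The van der Waerden bound -/

/-- The product `∏ i, (B X) i` of the linear forms given by the rows of `B`. -/
noncomputable def rowProd {n : ℕ} (B : Matrix (Fin n) (Fin n) ℝ) : MvPolynomial (Fin n) ℝ :=
  ∏ i, ∑ j, C (B i j) * X j

lemma aeval_rowProd {n : ℕ} {S : Type*} [CommRing S] [Algebra ℝ S]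
    (B : Matrix (Fin n) (Fin n) ℝ) (z : Fin n → S) :
    aeval z (rowProd B) = ∏ i, ∑ j, algebraMap ℝ S (B i j) * z j := by
  simp [rowProd]

lemma rowProd_posStable {n : ℕ} {B : Matrix (Fin n) (Fin n) ℝ} (hB : ∀ i j, 0 < B i j) :
    PosStable n (rowProd B) where
  hom := by
    have := IsHomogeneous.prod Finset.univ (fun i : Fin n => ∑ j, C (B i j) * X j) (fun _ => 1)
      (fun i _ => IsHomogeneous.sum _ _ _ fun j _ => by
        simpa using (isHomogeneous_C (Fin n) (B i j)).mul (isHomogeneous_X ℝ j))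
    simpa [rowProd] using this
  stable z h0 h1 := by
    rw [aeval_rowProd, Finset.prod_ne_zero_iff]
    intro i _ h
    obtain ⟨j1, hj1⟩ := h1
    have : 0 < (∑ j, algebraMap ℝ ℂ (B i j) * z j).re := by
      rw [Complex.re_sum]
      refine Finset.sum_pos' (fun j _ => ?_) ⟨j1, Finset.mem_univ _, ?_⟩
      · simpa using mul_nonneg (hB i j).le (h0 j)
      · simpa using mul_pos (hB i j1) hj1
    simp only [h, Complex.zero_re, lt_irrefl] at this
  pos x h0 h1 := by
    rw [aeval_rowProd]
    obtain ⟨j1, hj1⟩ := h1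
    refine Finset.prod_pos fun i _ =>
      Finset.sum_pos' (fun j _ => ?_) ⟨j1, Finset.mem_univ _, ?_⟩
    · exact mul_nonneg (hB i j).le (h0 j)
    · exact mul_pos (hB i j1) hj1

lemma coeff_rowProd {n : ℕ} (B : Matrix (Fin n) (Fin n) ℝ) :
    (rowProd B).coeff (Finsupp.equivFunOnFinite.symm fun _ => 1) = B.permanent := by
  classical
  rw [← Matrix.permanent_transpose, rowProd, Finset.prod_univ_sum, Fintype.piFinset_univ, coeff_sum]
  have hterm : ∀ f : Fin n → Fin n, coeff (Finsupp.equivFunOnFinite.symm fun _ => 1)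
      (∏ i, C (B i (f i)) * X (f i) : MvPolynomial (Fin n) ℝ) =
      if Function.Bijective f then ∏ i, B i (f i) else 0 := by
    intro f
    have h1 : (∏ i, C (B i (f i)) * X (f i) : MvPolynomial (Fin n) ℝ) =
        monomial (∑ i, Finsupp.single (f i) 1) (∏ i, B i (f i)) := by
      rw [Finset.prod_mul_distrib, ← map_prod, ← mul_one (∏ i, B i (f i)), ← C_mul_monomial,
        monomial_sum_one]
      simp [X]
    rw [h1, coeff_monomial]
    congr 1
    rw [eq_iff_iff]
    constructor
    · intro h
      refine Finite.surjective_iff_bijective.1 fun j => ?_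
      have := DFunLike.congr_fun h j
      by_contra hcon
      push Not at hcon
      rw [Finsupp.finsetSum_apply, Finset.sum_eq_zero
        (fun i _ => Finsupp.single_eq_of_ne (hcon i).symm)] at this
      simp at this
    · intro h
      ext j
      rw [Finsupp.finsetSum_apply]
      obtain ⟨i0, rfl⟩ := h.2 j
      rw [Finset.sum_eq_single i0]
      · simp
      · intro i _ hi
        exact Finsupp.single_eq_of_ne fun e => hi (h.1 e).symm
      · simp
  simp_rw [hterm]
  rw [← Finset.sum_filter, Matrix.permanent]
  symm
  refine Finset.sum_bij (fun σ _ => ⇑σ) ?_ ?_ ?_ ?_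
  · intro σ _
    exact Finset.mem_filter.2 ⟨by simp only [Finset.mem_univ], σ.bijective⟩
  · intro σ _ τ _ h; exact DFunLike.coe_injective h
  · intro f hf
    exact ⟨Equiv.ofBijective f (Finset.mem_filter.1 hf).2, Finset.mem_univ _, rfl⟩
  · intro σ _; simp

/-- The capacity of the row product of a doubly stochastic matrix is at least one, by weighted AM-GM. -/
lemma prod_le_rowProd {n : ℕ} {B : Matrix (Fin n) (Fin n) ℝ} (hB : ∀ i j, 0 < B i j)
    (hr : ∀ i, ∑ j, B i j = 1) (hc : ∀ j, ∑ i, B i j = 1) (y : Fin n → ℝ) (hy : ∀ i, 0 < y i) :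
    ∏ i, y i ≤ aeval y (rowProd B) := by
  rw [aeval_rowProd]
  calc ∏ j, y j = ∏ j, ∏ i, y j ^ B i j := by
        refine Finset.prod_congr rfl fun j _ => ?_
        rw [← Real.rpow_sum_of_pos (hy j), hc, Real.rpow_one]
    _ = ∏ i, ∏ j, y j ^ B i j := Finset.prod_comm
    _ ≤ _ := Finset.prod_le_prod
        (fun i _ => Finset.prod_nonneg fun j _ => Real.rpow_nonneg (hy j).le _)
        (fun i _ => Real.geom_mean_le_arith_mean_weighted _ _ _ (fun j _ => (hB i j).le) (hr i)
          (fun j _ => (hy j).le))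

/-- The van der Waerden bound for doubly stochastic matrices with positive entries. -/
theorem vdw_pos {n : ℕ} {B : Matrix (Fin n) (Fin n) ℝ} (hB : ∀ i j, 0 < B i j)
    (hr : ∀ i, ∑ j, B i j = 1) (hc : ∀ j, ∑ i, B i j = 1) :
    (n.factorial : ℝ) / (n : ℝ) ^ n ≤ B.permanent := by
  have := (rowProd_posStable hB).cap_le_coeff n _ 1
    (fun y hy => by simpa using prod_le_rowProd hB hr hc y hy)
  rwa [one_mul, coeff_rowProd] at this

/-- The van der Waerden bound for doubly stochastic matrices, by moving towards the constant matrix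
`1 / n` and letting the perturbation tend to zero. -/
theorem vdw {n : ℕ} {B : Matrix (Fin n) (Fin n) ℝ} (hB : ∀ i j, 0 ≤ B i j)
    (hr : ∀ i, ∑ j, B i j = 1) (hc : ∀ j, ∑ i, B i j = 1) :
    (n.factorial : ℝ) / (n : ℝ) ^ n ≤ B.permanent := by
  rcases Nat.eq_zero_or_pos n with rfl | hn
  · simp [Matrix.permanent_isEmpty]
  have hn' : (0 : ℝ) < n := by exact_mod_cast hn
  let E : ℝ → Matrix (Fin n) (Fin n) ℝ := fun e i j => (1 - e) * B i j + e * (1 / n)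
  have hcont : Continuous fun e => (E e).permanent := by
    simp only [Matrix.permanent, E]
    fun_prop
  have hlim : Filter.Tendsto (fun e => (E e).permanent) (nhdsWithin 0 (Set.Ioi 0))
      (nhds B.permanent) := by
    have h := (hcont.tendsto 0).mono_left (nhdsWithin_le_nhds (s := Set.Ioi 0))
    have e0 : E 0 = B := by ext i j; simp [E]
    rwa [e0] at h
  refine ge_of_tendsto hlim ?_
  filter_upwards [Ioo_mem_nhdsGT (zero_lt_one' ℝ)] with e he
  refine vdw_pos (fun i j => ?_) (fun i => ?_) (fun j => ?_)
  · have := mul_nonneg (sub_nonneg.2 he.2.le) (hB i j)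
    have := mul_pos he.1 (one_div_pos.2 hn')
    simp only [E]; linarith
  · simp only [E, Finset.sum_add_distrib, ← Finset.mul_sum, hr]
    simp [hn'.ne']
  · simp only [E, Finset.sum_add_distrib, ← Finset.mul_sum, hc]
    simp [hn'.ne']

end Permanent

/-! ### Bounds on the sequence -/

lemma bregmanG_lower (a : ℕ) : (a : ℝ) + 1 + 1.7 ≤ bregmanG (a + 1) := by
  induction a with
  | zero => have := Real.exp_one_gt_d9; simp only [bregmanG]; norm_num at *; linarith
  | succ a ih =>
    have hp : 0 < bregmanG (a + 1) := by
      have : (0 : ℝ) ≤ a := a.cast_nonneg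
      linarith
    rw [bregmanG]
    have h1 : 0 ≤ 1 / (2 * bregmanG (a + 1)) := by positivity
    have h2 : 0 ≤ 0.6 / bregmanG (a + 1) ^ 2 := by positivity
    push_cast
    linarith

/-- Inductive step: the increment exceeds one by at most `1/(2(b + 1.7)) + 0.6/(b + 1.7)² ≤ 1/(2b + 1)`,
which is at most `(1/2) log (1 + 1/b)`. The induction starts at index two, since the bound fails
at index one. -/
lemma bregmanG_upper (a : ℕ) :
    bregmanG (a + 2) ≤ ((a + 2 : ℕ) : ℝ) + (0.5 * Real.log ((a + 2 : ℕ) : ℝ) + 1.65) := by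
  induction a with
  | zero =>
    have h1 := Real.exp_one_gt_d9
    have h2 := Real.exp_one_lt_d9
    have h3 := Real.log_two_gt_d9
    simp only [bregmanG]
    have h4 : 1 / (2 * Real.exp 1) ≤ 0.1840 := by
      rw [div_le_iff₀ (by positivity)]; nlinarith
    have h5 : 0.6 / Real.exp 1 ^ 2 ≤ 0.0813 := by
      rw [div_le_iff₀ (by positivity)]; nlinarith
    norm_num at *
    linarith
  | succ a ih =>
    rw [bregmanG]
    have hl := bregmanG_lower (a + 1)
    set b : ℝ := ((a + 2 : ℕ) : ℝ) with hb
    have hbpos : 0 < b := by rw [hb]; positivity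
    have hl' : b + 1.7 ≤ bregmanG (a + 2) := by
      rw [hb]; push_cast at hl ⊢; linarith
    set G := bregmanG (a + 2)
    have e1 : ((a + 1 + 2 : ℕ) : ℝ) = b + 1 := by rw [hb]; push_cast; ring
    have h1 : 1 / (2 * G) ≤ 1 / (2 * (b + 1.7)) := by gcongr
    have h2 : 0.6 / G ^ 2 ≤ 0.6 / (b + 1.7) ^ 2 := by gcongr
    have h3 : Real.log (b + 1) = Real.log b + Real.log (1 + 1 / b) := by
      rw [← Real.log_mul hbpos.ne' (by positivity)]; congr 1; field_simp
    have h4 := Real.le_log_one_add_of_nonneg (x := 1 / b) (by positivity)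
    have h5 : 2 * (1 / b) / (1 / b + 2) = 2 / (2 * b + 1) := by field_simp; ring
    rw [h5] at h4
    have h6 : 1 / (2 * (b + 1.7)) + 0.6 / (b + 1.7) ^ 2 ≤ 0.5 * (2 / (2 * b + 1)) := by
      rw [div_add_div _ _ (by positivity) (by positivity), ← mul_div_assoc,
        div_le_div_iff₀ (by positivity) (by positivity)]
      nlinarith [sq_nonneg b, mul_pos hbpos hbpos, mul_pos (mul_pos hbpos hbpos) hbpos]
    rw [e1, h3]
    linarith

/-! ### Conclusion -/

/-- For a Δ-regular 0-1 `n × n` matrix with `Δ ≥ 2` and `n ≥ 1`,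
`M̃(A)/per(A) ≤ (1/√(2πn)) · exp((n/Δ)(0.5 ln Δ + 1.65))`, where `M̃(A) = (g(Δ)/e)ⁿ`. -/
theorem Mtilde_div_permanent_le (n Δ : ℕ) (hn : 1 ≤ n) (hΔ : 2 ≤ Δ)
    (A : Matrix (Fin n) (Fin n) ℕ)
    (h01 : ∀ i j, A i j = 0 ∨ A i j = 1)
    (hrow : ∀ i, ∑ j, A i j = Δ)
    (hcol : ∀ j, ∑ i, A i j = Δ) :
    (bregmanG Δ / Real.exp 1) ^ n / (A.permanent : ℝ)
      ≤ (1 / Real.sqrt (2 * Real.pi * n))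
        * Real.exp (((n : ℝ) / Δ) * (0.5 * Real.log Δ + 1.65)) := by
  have hD : (0 : ℝ) < Δ := by exact_mod_cast (by omega : 0 < Δ)
  have hN : (0 : ℝ) < n := by exact_mod_cast hn
  have hvdw := vdw (B := (Δ : ℝ)⁻¹ • A.map (Nat.cast : ℕ → ℝ))
    (fun i j => by simp; positivity)
    (fun i => by
      have := hrow i
      simp only [Matrix.smul_apply, Matrix.map_apply, smul_eq_mul, ← Finset.mul_sum]
      rw [← Nat.cast_sum, this, inv_mul_cancel₀ hD.ne'])
    (fun j => by
      have := hcol j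
      simp only [Matrix.smul_apply, Matrix.map_apply, smul_eq_mul, ← Finset.mul_sum]
      rw [← Nat.cast_sum, this, inv_mul_cancel₀ hD.ne'])
  have hcast : (A.map (Nat.cast : ℕ → ℝ)).permanent = (A.permanent : ℝ) := by
    simp [Matrix.permanent]
  rw [Matrix.permanent_smul, hcast, Fintype.card_fin, inv_pow] at hvdw
  have hper : Real.sqrt (2 * Real.pi * n) * (Δ / Real.exp 1) ^ n ≤ (A.permanent : ℝ) := by
    have hst := Stirling.le_factorial_stirling n
    have h1 : (n.factorial : ℝ) / (n : ℝ) ^ n * (Δ : ℝ) ^ n ≤ A.permanent := by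
      rw [inv_mul_eq_div, le_div_iff₀ (by positivity)] at hvdw
      exact hvdw
    refine le_trans ?_ h1
    calc Real.sqrt (2 * Real.pi * n) * (Δ / Real.exp 1) ^ n
        = (Real.sqrt (2 * Real.pi * n) * (n / Real.exp 1) ^ n) / (n : ℝ) ^ n * (Δ : ℝ) ^ n := by
          rw [div_pow, div_pow]; field_simp
      _ ≤ _ := by gcongr
  have hs : 0 < Real.sqrt (2 * Real.pi * n) := Real.sqrt_pos.2 (by positivity)
  obtain ⟨a, rfl⟩ : ∃ a, Δ = a + 2 := ⟨Δ - 2, by omega⟩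
  have hup := bregmanG_upper a
  have hG : 0 < bregmanG (a + 2) := by
    have := bregmanG_lower (a + 1)
    have : (0 : ℝ) ≤ ((a + 1 : ℕ) : ℝ) := Nat.cast_nonneg _
    linarith
  generalize bregmanG (a + 2) = G at *
  generalize 0.5 * Real.log ((a + 2 : ℕ) : ℝ) + 1.65 = L at *
  generalize ((a + 2 : ℕ) : ℝ) = D at *
  have hratio : G / D ≤ Real.exp (L / D) := by
    refine le_trans ?_ (Real.add_one_le_exp _)
    rw [div_add_one hD.ne']
    gcongr
    linarith
  calc (G / Real.exp 1) ^ n / (A.permanent : ℝ)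
      ≤ (G / Real.exp 1) ^ n / (Real.sqrt (2 * Real.pi * n) * (D / Real.exp 1) ^ n) := by
        gcongr
    _ = 1 / Real.sqrt (2 * Real.pi * n) * (G / D) ^ n := by
        simp only [div_pow]; field_simp
    _ ≤ 1 / Real.sqrt (2 * Real.pi * n) * Real.exp (L / D) ^ n := by gcongr
    _ = _ := by rw [← Real.exp_nat_mul]; congr 2; ring
end
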